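/- Let G be a unified chain graph (UCG) over a finite vertex set V and let X, Y, Z be pairwise disjoint subsets of V with X ⊥_G Y | Z. Let Y' = {B' ∈ V(G^{X∪Y∪Z}) ∖ (X ∪ Z) : X ⊥_{G^{X∪Y∪Z}} B' | Z} and X' = V(G^{X∪Y∪Z}) ∖ (Y' ∪ Z). Then there is no pure collider route in G^{X∪Y∪Z} between any A' ∈ X' and any B' ∈ Y'. -/

import Mathlib

open Matrix MeasureTheory ProbabilityTheory

attribute [local instance] Classical.propDecidable

noncomputable section

variable {V : Type*}

/-- The submatrix of `S` with rows indexed by `X` and columns indexed by `Y`. -/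
def msub (S : Matrix V V ℝ) (X Y : Finset V) : Matrix X Y ℝ :=
  Matrix.of fun i j => S i.1 j.1

/-- Conditional independence `X ⊥ Y | Z` for a centered Gaussian distribution with
positive definite covariance matrix `S`:  `Σ_{X,Y} − Σ_{X,Z} (Σ_{Z,Z})⁻¹ Σ_{Z,Y} = 0`. -/
def gaussCI [Fintype V] [DecidableEq V] (S : Matrix V V ℝ) (X Y Z : Finset V) : Prop :=
  msub S X Y - msub S X Z * (msub S Z Z)⁻¹ * msub S Z Y = 0

/-- Pairwise disjointness of three sets. -/
def PDisj (X Y Z : Finset V) : Prop :=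
  Disjoint X Y ∧ Disjoint X Z ∧ Disjoint Y Z

/-- Pairwise disjointness of four sets. -/
def PDisj4 (X Y W Z : Finset V) : Prop :=
  Disjoint X Y ∧ Disjoint X W ∧ Disjoint X Z ∧ Disjoint Y W ∧ Disjoint Y Z ∧ Disjoint W Z

/-- A graph with three kinds of edges: undirected (`undir`), solid directed (`solid`,
written `A → B`) and dashed directed (`dashed`, written `A ⇢ B`).  No axioms are imposed. -/
structure PreGraph (V : Type*) where
  undir : V → V → Prop
  solid : V → V → Prop
  dashed : V → V → Prop

namespace PreGraph

variable (G : PreGraph V)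

/-- There is an undirected edge between `a` and `b`. -/
def und (a b : V) : Prop := G.undir a b ∨ G.undir b a

/-- `a` and `b` are adjacent. -/
def adj (a b : V) : Prop :=
  G.und a b ∨ G.solid a b ∨ G.solid b a ∨ G.dashed a b ∨ G.dashed b a

/-- The edge between `a` and `b` is undirected or directed (solid or dashed) from `a` to `b`. -/
def fwd (a b : V) : Prop := G.und a b ∨ G.solid a b ∨ G.dashed a b

/-- A route in `G`: a sequence of nodes `nodes 0, nodes 1, …, nodes len` such that
consecutive nodes are adjacent. -/
structure Route (G : PreGraph V) where
  len : ℕ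
  nodes : ℕ → V
  adj_step : ∀ i < len, G.adj (nodes i) (nodes (i + 1))

/-- `c` is a collider node between `a` and `b`:  `a ⇢ c ⇠ b`, `a ⇢ c − b` (in either of the
two traversal directions) or `a ⇢ c ← b` (in either of the two traversal directions). -/
def colliderTriple (a c b : V) : Prop :=
  (G.dashed a c ∧ G.dashed b c) ∨
  (G.dashed a c ∧ G.und c b) ∨ (G.und a c ∧ G.dashed b c) ∨
  (G.dashed a c ∧ G.solid b c) ∨ (G.solid a c ∧ G.dashed b c)

variable {G} in
/-- The node at position `k` of the route `ρ` is a collider node of `ρ`. -/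
def Route.colliderNodeAt (ρ : G.Route) (k : ℕ) : Prop :=
  1 ≤ k ∧ k < ρ.len ∧ G.colliderTriple (ρ.nodes (k - 1)) (ρ.nodes k) (ρ.nodes (k + 1))

variable {G} in
/-- The positions `p, …, q` of `ρ` form a collider section of `ρ`, i.e. a maximal undirected
subroute `C1 − ⋯ − Cn` of `ρ` such that `A → C1 − ⋯ − Cn ← B` is a subroute of `ρ`. -/
def Route.colliderSectionOcc (ρ : G.Route) (p q : ℕ) : Prop :=
  1 ≤ p ∧ p ≤ q ∧ q + 1 ≤ ρ.len ∧
  (∀ m, p ≤ m → m < q → G.und (ρ.nodes m) (ρ.nodes (m + 1))) ∧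
  G.solid (ρ.nodes (p - 1)) (ρ.nodes p) ∧ G.solid (ρ.nodes (q + 1)) (ρ.nodes q)

variable {G} in
/-- The node at position `k` of `ρ` lies in a collider section of `ρ`. -/
def Route.inColliderSectionAt (ρ : G.Route) (k : ℕ) : Prop :=
  ∃ p q, ρ.colliderSectionOcc p q ∧ p ≤ k ∧ k ≤ q

variable {G} in
/-- The route `ρ` is `Z`-open: (i) all collider nodes are in `Z`, (ii) every collider
section contains some node of `Z`, and (iii) every node which is neither a collider node
nor inside a collider section is outside `Z`. -/
def Route.IsZOpen (ρ : G.Route) (Z : Finset V) : Prop :=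
  (∀ k, ρ.colliderNodeAt k → ρ.nodes k ∈ Z) ∧
  (∀ p q, ρ.colliderSectionOcc p q → ∃ m, p ≤ m ∧ m ≤ q ∧ ρ.nodes m ∈ Z) ∧
  (∀ k ≤ ρ.len, ¬ ρ.colliderNodeAt k → ¬ ρ.inColliderSectionAt k → ρ.nodes k ∉ Z)

variable {G} in
/-- A pure collider route (with at least one edge): every intermediate node is a collider
node or lies in a collider section of the route. -/
def Route.IsPureCollider (ρ : G.Route) : Prop :=
  1 ≤ ρ.len ∧ ∀ k, 0 < k → k < ρ.len → ρ.colliderNodeAt k ∨ ρ.inColliderSectionAt k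

/-- Separation `X ⊥_G Y | Z`: there is no `Z`-open route in `G` between a node of `X` and a
node of `Y`. -/
def Sep (X Y Z : Finset V) : Prop :=
  ¬ ∃ ρ : G.Route,
      ((ρ.nodes 0 ∈ X ∧ ρ.nodes ρ.len ∈ Y) ∨ (ρ.nodes 0 ∈ Y ∧ ρ.nodes ρ.len ∈ X)) ∧
      ρ.IsZOpen Z

section Finite

variable [Fintype V] [DecidableEq V]

/-- The fathers of `X`: nodes `b` with `b → a` in `G` for some `a ∈ X`. -/
def fa (X : Finset V) : Finset V := Finset.univ.filter fun b => ∃ a ∈ X, G.solid b a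

/-- The mothers of `X`: nodes `b` with `b ⇢ a` in `G` for some `a ∈ X`. -/
def mo (X : Finset V) : Finset V := Finset.univ.filter fun b => ∃ a ∈ X, G.dashed b a

/-- The parents of `X`. -/
def pa (X : Finset V) : Finset V := G.fa X ∪ G.mo X

/-- The neighbors of `X`: nodes `b` with `b − a` in `G` for some `a ∈ X`. -/
def nb (X : Finset V) : Finset V := Finset.univ.filter fun b => ∃ a ∈ X, G.und b a

/-- There is a descending route from `a` to `b`: all edges undirected or directed in the
direction of travel, containing at least one directed edge. -/
def descends (a b : V) : Prop :=
  ∃ (n : ℕ) (f : ℕ → V), f 0 = a ∧ f n = b ∧ (∀ i < n, G.fwd (f i) (f (i + 1))) ∧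
    ∃ i < n, G.solid (f i) (f (i + 1)) ∨ G.dashed (f i) (f (i + 1))

/-- The non-descendants of `X`. -/
def nd (X : Finset V) : Finset V := Finset.univ.filter fun b => ¬ ∃ a ∈ X, G.descends a b

/-- Connectivity by undirected routes. -/
def uconn : V → V → Prop := Relation.ReflTransGen G.und

/-- The chain component containing `i`. -/
def cc (i : V) : Finset V := Finset.univ.filter fun j => G.uconn i j

/-- The set of chain components of `G`. -/
def ccs : Finset (Finset V) := Finset.univ.image G.cc

/-- The nodes incident to some edge of `G`. -/
def verts : Finset V := Finset.univ.filter fun a => ∃ b, G.adj a b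

/-- `π` is a topological ordering of the chain components: it is constant on components and
increases along directed edges. -/
def IsTopoOrder (π : V → ℕ) : Prop :=
  (∀ a b, G.uconn a b → π a = π b) ∧ ∀ a b, G.solid a b ∨ G.dashed a b → π a < π b

/-- Equation 1: for every topological ordering of the chain components, each component `K`
is independent of the preceding components minus `Pa(K)` given `Pa(K)`. -/
def eq1 (S : Matrix V V ℝ) : Prop :=
  ∀ π : V → ℕ, G.IsTopoOrder π → ∀ i : V,
    gaussCI S (G.cc i) ((Finset.univ.filter fun b => π b < π i) \ G.pa (G.cc i))
      (G.pa (G.cc i))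

/-- The regression coefficients `β_K = Σ_{K,Pa(K)} (Σ_{Pa(K),Pa(K)})⁻¹`. -/
def beta (S : Matrix V V ℝ) (K : Finset V) : Matrix K (G.pa K) ℝ :=
  msub S K (G.pa K) * (msub S (G.pa K) (G.pa K))⁻¹

/-- The conditional covariance matrix `Λ_K`. -/
def lam (S : Matrix V V ℝ) (K : Finset V) : Matrix K K ℝ :=
  msub S K K - msub S K (G.pa K) * (msub S (G.pa K) (G.pa K))⁻¹ * msub S (G.pa K) K

/-- The precision matrix `Ω = (Σ_{K ∪ Pa(K), K ∪ Pa(K)})⁻¹`. -/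
def om (S : Matrix V V ℝ) (K : Finset V) : Matrix ↥(K ∪ G.pa K) ↥(K ∪ G.pa K) ℝ :=
  (msub S (K ∪ G.pa K) (K ∪ G.pa K))⁻¹

/-- Equation 6: `(β_K)_{i,j} = 0` for all `i ∈ K` and `j ∈ Mo(K) ∖ Mo(i)`. -/
def eq6 (S : Matrix V V ℝ) : Prop :=
  ∀ K ∈ G.ccs, ∀ i (hi : i ∈ K), ∀ j (hj : j ∈ G.pa K),
    j ∈ G.mo K → j ∉ G.mo {i} → G.beta S K ⟨i, hi⟩ ⟨j, hj⟩ = 0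

/-- Equation 7: `Ω_{i,j} = 0` for all `i ∈ K` and `j ∈ Fa(K) ∖ Fa(i)`. -/
def eq7 (S : Matrix V V ℝ) : Prop :=
  ∀ K ∈ G.ccs, ∀ i (hi : i ∈ K), ∀ j (hj : j ∈ G.pa K),
    j ∈ G.fa K → j ∉ G.fa {i} →
    G.om S K ⟨i, Finset.mem_union_left _ hi⟩ ⟨j, Finset.mem_union_right _ hj⟩ = 0

/-- Equation 8: `(Λ_K⁻¹)_{i,j} = 0` for all `i ∈ K` and `j ∈ K ∖ ({i} ∪ Ne(i))`. -/
def eq8 (S : Matrix V V ℝ) : Prop :=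
  ∀ K ∈ G.ccs, ∀ i (hi : i ∈ K), ∀ j (hj : j ∈ K),
    j ≠ i → j ∉ G.nb {i} → (G.lam S K)⁻¹ ⟨i, hi⟩ ⟨j, hj⟩ = 0

/-- `p` satisfies Equation 1 and the zero restrictions of Equations 6–8 w.r.t. `G`. -/
def eqs (S : Matrix V V ℝ) : Prop := G.eq1 S ∧ G.eq6 S ∧ G.eq7 S ∧ G.eq8 S

/-- The global Markov property with respect to `G`, for an abstract ternary
(conditional-independence) relation `I`. -/
def globalMP (I : Finset V → Finset V → Finset V → Prop) : Prop :=
  ∀ X Y Z : Finset V, PDisj X Y Z → G.Sep X Y Z → I X Y Z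

/-- The block-recursive Markov property (B1)–(B3) with respect to `G`. -/
def blockRecMP (I : Finset V → Finset V → Finset V → Prop) : Prop :=
  ∀ K ∈ G.ccs, ∀ i ∈ K,
    I {i} (((G.nd K \ K) \ G.fa K) \ G.mo {i}) (G.fa K ∪ G.mo {i}) ∧
    I {i} (((G.nd K \ K) \ G.fa {i}) \ G.mo K) ((K \ {i}) ∪ G.fa {i} ∪ G.mo K) ∧
    ∀ j ∈ K, j ≠ i → j ∉ G.nb {i} → I {i} {j} ((K \ {i, j}) ∪ G.pa K)

/-- The pairwise Markov property (P1)–(P2) with respect to `G`. -/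
def pairwiseMP (I : Finset V → Finset V → Finset V → Prop) : Prop :=
  ∀ i j : V, i ≠ j → ¬ G.adj i j → ∀ K ∈ G.ccs, i ∈ K →
    (j ∈ ((G.nd {i} \ K) \ G.fa K) \ G.mo {i} → I {i} {j} ((G.nd {i} \ K) \ {j})) ∧
    (j ∈ ((G.nd {i} \ {i}) \ G.fa {i}) \ G.mo K → I {i} {j} (G.nd {i} \ {i, j}))

/-- The local Markov property (L1)–(L2) with respect to `G`. -/
def localMP (I : Finset V → Finset V → Finset V → Prop) : Prop :=
  ∀ K ∈ G.ccs, ∀ i ∈ K,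
    I {i} (((G.nd {i} \ K) \ G.fa K) \ G.mo {i}) (G.fa K ∪ G.mo {i}) ∧
    I {i} ((((G.nd {i} \ {i}) \ G.pa {i}) \ G.nb {i}) \ G.mo (G.nb {i}))
      (G.pa {i} ∪ G.nb {i} ∪ G.mo (G.nb {i}))

/-- The subgraph `G^U`: it keeps the edge `A ⊸ B` (with its type and orientation) iff `G`
has a route `A ⊸ B ⊸ ⋯ ⊸ C` with `C ∈ U`, all edges undirected or directed in the
direction of travel, and no subroute `R ⇢ S − T`. -/
def goodFrom (U : Finset V) (a b : V) : Prop :=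
  ∃ (f : ℕ → V) (n : ℕ), 1 ≤ n ∧ f 0 = a ∧ f 1 = b ∧ f n ∈ U ∧
    (∀ i < n, G.fwd (f i) (f (i + 1))) ∧
    ∀ i, i + 2 ≤ n → ¬ (G.dashed (f i) (f (i + 1)) ∧ G.und (f (i + 1)) (f (i + 2)))

/-- The graph `G^U`. -/
def derived (U : Finset V) : PreGraph V where
  undir a b := G.undir a b ∧ G.goodFrom U a b
  solid a b := G.solid a b ∧ G.goodFrom U a b
  dashed a b := G.dashed a b ∧ G.goodFrom U a b

/-- The set `Y'` used in Lemmas 2 and 3: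
`Y' = {B' ∈ V(G^{X∪Y∪Z}) ∖ (X ∪ Z) : X ⊥_{G^{X∪Y∪Z}} B' | Z}`. -/
def derivedYp (X Y Z : Finset V) : Finset V :=
  ((G.derived (X ∪ Y ∪ Z)).verts \ (X ∪ Z)).filter fun b =>
    (G.derived (X ∪ Y ∪ Z)).Sep X {b} Z

/-- The set `X' = V(G^{X∪Y∪Z}) ∖ (Y' ∪ Z)` used in Lemmas 2 and 3. -/
def derivedXp (X Y Z : Finset V) : Finset V :=
  (G.derived (X ∪ Y ∪ Z)).verts \ (G.derivedYp X Y Z ∪ Z)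

end Finite

end PreGraph

/-- A chain graph: at most one edge between any pair of distinct nodes (undirected, solid
directed, or dashed directed) and no semidirected cycles. -/
structure ChainGraph (V : Type*) extends PreGraph V where
  undir_symm : ∀ a b, toPreGraph.undir a b → toPreGraph.undir b a
  undir_irrefl : ∀ a, ¬ toPreGraph.undir a a
  solid_irrefl : ∀ a, ¬ toPreGraph.solid a a
  dashed_irrefl : ∀ a, ¬ toPreGraph.dashed a a
  undir_not_solid : ∀ a b, toPreGraph.undir a b → ¬ toPreGraph.solid a b
  undir_not_dashed : ∀ a b, toPreGraph.undir a b → ¬ toPreGraph.dashed a b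
  solid_not_solid : ∀ a b, toPreGraph.solid a b → ¬ toPreGraph.solid b a
  solid_not_dashed : ∀ a b, toPreGraph.solid a b → ¬ toPreGraph.dashed a b
  solid_not_dashed_rev : ∀ a b, toPreGraph.solid a b → ¬ toPreGraph.dashed b a
  dashed_not_dashed : ∀ a b, toPreGraph.dashed a b → ¬ toPreGraph.dashed b a
  no_semidirected_cycle : ¬ ∃ (f : ℕ → V) (n : ℕ), 1 ≤ n ∧ f n = f 0 ∧
    (toPreGraph.solid (f 0) (f 1) ∨ toPreGraph.dashed (f 0) (f 1)) ∧
    ∀ i < n, toPreGraph.fwd (f i) (f (i + 1))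

namespace ChainGraph

variable (G : ChainGraph V)

/-- An LWF chain graph: no dashed directed edges. -/
def IsLWF : Prop := ∀ a b, ¬ G.toPreGraph.dashed a b

/-- An AMP chain graph: no solid directed edges. -/
def IsAMP : Prop := ∀ a b, ¬ G.toPreGraph.solid a b

/-- A unified chain graph: `Fa(K) ∩ Mo(K) = ∅` for every chain component `K`. -/
def IsUCG [Fintype V] [DecidableEq V] : Prop :=
  ∀ K ∈ G.toPreGraph.ccs, Disjoint (G.toPreGraph.fa K) (G.toPreGraph.mo K)

end ChainGraph


/-- The AMP chain graph obtained from `G` by deleting every solid directed edge. -/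
def ChainGraph.dropSolid (G : ChainGraph V) : ChainGraph V where
  undir := G.toPreGraph.undir
  solid _ _ := False
  dashed := G.toPreGraph.dashed
  undir_symm := G.undir_symm
  undir_irrefl := G.undir_irrefl
  solid_irrefl _ h := h
  dashed_irrefl := G.dashed_irrefl
  undir_not_solid _ _ _ h := h
  undir_not_dashed := G.undir_not_dashed
  solid_not_solid _ _ h := h.elim
  solid_not_dashed _ _ h := h.elim
  solid_not_dashed_rev _ _ h := h.elim
  dashed_not_dashed := G.dashed_not_dashed
  no_semidirected_cycle := fun ⟨f, n, hn, hcyc, hstart, hsteps⟩ =>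
    G.no_semidirected_cycle ⟨f, n, hn, hcyc, Or.inr (hstart.resolve_left id),
      fun i hi => (hsteps i hi).imp id (Or.imp False.elim id)⟩

/-- The restriction of `ω : V → ℝ` to the coordinates in `S`. -/
def marg (S : Finset V) : (V → ℝ) → (S → ℝ) := fun ω s => ω s.1

lemma marg_measurable (S : Finset V) : Measurable (marg (V := V) S) :=
  measurable_pi_lambda _ fun s => measurable_pi_apply s.1

/-- Conditional independence of the coordinate tuples indexed by `X` and `Y` given the
coordinate tuple indexed by `Z`, for a distribution `μ` on `ℝ^V`. -/
def mCI [Fintype V] (μ : Measure (V → ℝ)) [IsFiniteMeasure μ] (X Y Z : Finset V) : Prop :=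
  CondIndepFun (MeasurableSpace.comap (marg Z) inferInstance) ((marg_measurable Z).comap_le)
    (marg X) (marg Y) μ

/-- A probability distribution `μ` on `ℝ^V` satisfies the global Markov property with
respect to `G`. -/
def measGlobalMarkov [Fintype V] [DecidableEq V] (G : PreGraph V) (μ : Measure (V → ℝ))
    [IsFiniteMeasure μ] : Prop :=
  ∀ X Y Z : Finset V, PDisj X Y Z → G.Sep X Y Z → mCI μ X Y Z

/-- A graphoid over `V`: a ternary relation on pairwise disjoint subsets of `V` satisfying
symmetry, decomposition, weak union, contraction and intersection. -/
structure Graphoid (V : Type*) [DecidableEq V] where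
  rel : Finset V → Finset V → Finset V → Prop
  symmetry : ∀ X Y Z : Finset V, PDisj X Y Z → rel X Y Z → rel Y X Z
  decomposition : ∀ X Y W Z : Finset V, PDisj4 X Y W Z → rel X (Y ∪ W) Z → rel X Y Z
  weakUnion : ∀ X Y W Z : Finset V, PDisj4 X Y W Z → rel X (Y ∪ W) Z → rel X Y (Z ∪ W)
  contraction : ∀ X Y W Z : Finset V, PDisj4 X Y W Z →
    rel X Y (Z ∪ W) → rel X W Z → rel X (Y ∪ W) Z
  intersection : ∀ X Y W Z : Finset V, PDisj4 X Y W Z →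
    rel X Y (Z ∪ W) → rel X W (Z ∪ Y) → rel X (Y ∪ W) Z

/-- The conditional variance `Σ_{a,a|B} = Σ_{a,a} − Σ_{a,B} (Σ_{B,B})⁻¹ Σ_{B,a}`. -/
def condVar [Fintype V] [DecidableEq V] (S : Matrix V V ℝ) (a : V) (B : Finset V) : ℝ :=
  S a a - ∑ b₁ : B, ∑ b₂ : B, S a b₁.1 * (msub S B B)⁻¹ b₁ b₂ * S b₂.1 a

namespace PreGraph

/-- Between any two nodes of `G` there is at most one type and orientation of edge. -/
structure IsSimple (G : PreGraph V) : Prop where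
  und_not_solid : ∀ a b, G.und a b → ¬ G.solid a b
  und_not_dashed : ∀ a b, G.und a b → ¬ G.dashed a b
  solid_not_solid : ∀ a b, G.solid a b → ¬ G.solid b a
  solid_not_dashed : ∀ a b, G.solid a b → ¬ G.dashed a b
  solid_not_dashed_rev : ∀ a b, G.solid a b → ¬ G.dashed b a
  dashed_not_dashed : ∀ a b, G.dashed a b → ¬ G.dashed b a

lemma und_symm {G : PreGraph V} {a b : V} (h : G.und a b) : G.und b a := h.symm

lemma colliderTriple_symm {G : PreGraph V} {a c b : V} (h : G.colliderTriple a c b) :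
    G.colliderTriple b c a := by
  have := @und_symm V G
  unfold colliderTriple at *
  grind

namespace Route

variable {G : PreGraph V}

/-- The route traversed backwards. -/
def reverse (ρ : G.Route) : G.Route where
  len := ρ.len
  nodes i := ρ.nodes (ρ.len - i)
  adj_step i hi := by
    have h := ρ.adj_step (ρ.len - (i + 1)) (by omega)
    rw [show ρ.len - (i + 1) + 1 = ρ.len - i by omega] at h
    have := @und_symm V G
    unfold adj at *
    grind

lemma reverse_len (ρ : G.Route) : ρ.reverse.len = ρ.len := rfl

lemma reverse_nodes (ρ : G.Route) (i : ℕ) : ρ.reverse.nodes i = ρ.nodes (ρ.len - i) := rfl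

lemma reverse_nodes_sub (ρ : G.Route) {i : ℕ} (hi : i ≤ ρ.len) :
    ρ.reverse.nodes (ρ.len - i) = ρ.nodes i := by
  rw [reverse_nodes, Nat.sub_sub_self hi]

lemma colliderNodeAt.of_reverse {ρ : G.Route} {k : ℕ} (h : ρ.reverse.colliderNodeAt k) :
    ρ.colliderNodeAt (ρ.len - k) := by
  obtain ⟨h1, h2, h3⟩ := h
  rw [reverse_len] at h2
  simp only [reverse_nodes] at h3
  refine ⟨by omega, by omega, ?_⟩
  rw [show ρ.len - k - 1 = ρ.len - (k + 1) by omega,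
    show ρ.len - k + 1 = ρ.len - (k - 1) by omega]
  exact colliderTriple_symm h3

lemma colliderNodeAt.reverse {ρ : G.Route} {k : ℕ} (h : ρ.colliderNodeAt k) :
    ρ.reverse.colliderNodeAt (ρ.len - k) := by
  obtain ⟨h1, h2, h3⟩ := h
  refine ⟨by omega, by rw [reverse_len]; omega, ?_⟩
  rw [show ρ.len - k - 1 = ρ.len - (k + 1) by omega,
    show ρ.len - k + 1 = ρ.len - (k - 1) by omega, reverse_nodes_sub _ (by omega),
    reverse_nodes_sub _ (by omega), reverse_nodes_sub _ (by omega)]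
  exact colliderTriple_symm h3

lemma colliderSectionOcc.of_reverse {ρ : G.Route} {p q : ℕ}
    (h : ρ.reverse.colliderSectionOcc p q) :
    ρ.colliderSectionOcc (ρ.len - q) (ρ.len - p) := by
  obtain ⟨h1, h2, h3, h4, h5, h6⟩ := h
  rw [reverse_len] at h3
  simp only [reverse_nodes] at h4 h5 h6
  refine ⟨by omega, by omega, by omega, fun m hm hm' => ?_, ?_, ?_⟩
  · have := h4 (ρ.len - (m + 1)) (by omega) (by omega)
    rw [show ρ.len - (ρ.len - (m + 1)) = m + 1 by omega,
      show ρ.len - (ρ.len - (m + 1) + 1) = m by omega] at this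
    exact und_symm this
  · rwa [show ρ.len - q - 1 = ρ.len - (q + 1) by omega]
  · rwa [show ρ.len - p + 1 = ρ.len - (p - 1) by omega]

lemma colliderSectionOcc.reverse {ρ : G.Route} {p q : ℕ} (h : ρ.colliderSectionOcc p q) :
    ρ.reverse.colliderSectionOcc (ρ.len - q) (ρ.len - p) := by
  obtain ⟨h1, h2, h3, h4, h5, h6⟩ := h
  refine ⟨by omega, by omega, by rw [reverse_len]; omega, fun m hm hm' => ?_, ?_, ?_⟩
  · have := h4 (ρ.len - (m + 1)) (by omega) (by omega)
    rw [show ρ.len - (m + 1) + 1 = ρ.len - m by omega] at this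
    exact und_symm this
  · rwa [show ρ.len - q - 1 = ρ.len - (q + 1) by omega, reverse_nodes_sub _ (by omega),
      reverse_nodes_sub _ (by omega)]
  · rwa [show ρ.len - p + 1 = ρ.len - (p - 1) by omega, reverse_nodes_sub _ (by omega),
      reverse_nodes_sub _ (by omega)]

lemma inColliderSectionAt.reverse {ρ : G.Route} {k : ℕ} (h : ρ.inColliderSectionAt k) :
    ρ.reverse.inColliderSectionAt (ρ.len - k) := by
  obtain ⟨p, q, h, hp, hq⟩ := h
  exact ⟨_, _, h.reverse, by omega, by omega⟩

lemma IsZOpen.reverse {ρ : G.Route} {Z : Finset V} (h : ρ.IsZOpen Z) :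
    ρ.reverse.IsZOpen Z := by
  obtain ⟨h1, h2, h3⟩ := h
  refine ⟨fun k hk => h1 _ hk.of_reverse, fun p q hpq => ?_, fun k hk hc hs => ?_⟩
  · obtain ⟨m, hm, hm', hZ⟩ := h2 _ _ hpq.of_reverse
    have := hpq.2.2.1
    rw [reverse_len] at this
    exact ⟨ρ.len - m, by omega, by omega, by rwa [reverse_nodes_sub _ (by omega)]⟩
  · rw [reverse_len] at hk
    have e : ρ.len - (ρ.len - k) = k := by omega
    exact h3 _ (by omega) (fun h => hc (e ▸ h.reverse)) (fun h => hs (e ▸ h.reverse))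

lemma IsPureCollider.reverse {ρ : G.Route} (h : ρ.IsPureCollider) :
    ρ.reverse.IsPureCollider := by
  refine ⟨h.1, fun k hk hk' => ?_⟩
  rw [reverse_len] at hk'
  have e : ρ.len - (ρ.len - k) = k := by omega
  exact (h.2 (ρ.len - k) (by omega) (by omega)).imp (fun h => e ▸ h.reverse)
    (fun h => e ▸ h.reverse)

lemma not_inColliderSectionAt_of_backward (hG : G.IsSimple) {ρ : G.Route} {k : ℕ}
    (h : G.solid (ρ.nodes (k + 1)) (ρ.nodes k) ∨ G.dashed (ρ.nodes (k + 1)) (ρ.nodes k)) :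
    ¬ ρ.inColliderSectionAt (k + 1) := by
  rintro ⟨p, q, ⟨h1, h2, h3, h4, h5, h6⟩, hp, hq⟩
  obtain ⟨g1, g2, g3, g4, g5, g6⟩ := hG
  have := @und_symm V G
  rcases hp.eq_or_lt with rfl | hp
  · simp only [Nat.add_sub_cancel] at h5
    grind
  · have := h4 k (by omega) (by omega)
    grind

lemma not_inColliderSectionAt_of_dashed (hG : G.IsSimple) {ρ : G.Route} {k : ℕ}
    (h : G.dashed (ρ.nodes k) (ρ.nodes (k + 1))) : ¬ ρ.inColliderSectionAt (k + 1) := by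
  rintro ⟨p, q, ⟨h1, h2, h3, h4, h5, h6⟩, hp, hq⟩
  obtain ⟨g1, g2, g3, g4, g5, g6⟩ := hG
  rcases hp.eq_or_lt with rfl | hp
  · simp only [Nat.add_sub_cancel] at h5
    grind
  · have := h4 k (by omega) (by omega)
    grind

lemma inColliderSectionAt.of_und (hG : G.IsSimple) {ρ : G.Route} {k : ℕ}
    (h : ρ.inColliderSectionAt (k + 1)) (hu : G.und (ρ.nodes k) (ρ.nodes (k + 1))) :
    ρ.inColliderSectionAt k := by
  obtain ⟨p, q, h', hp, hq⟩ := h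
  rcases hp.eq_or_lt with rfl | hp
  · have := h'.2.2.2.2.1
    simp only [Nat.add_sub_cancel] at this
    exact absurd this (hG.und_not_solid _ _ hu)
  · exact ⟨p, q, h', by omega, by omega⟩

lemma not_colliderNodeAt_of_backward (hG : G.IsSimple) {ρ : G.Route} {k : ℕ}
    (h : G.solid (ρ.nodes (k + 1)) (ρ.nodes k) ∨ G.dashed (ρ.nodes (k + 1)) (ρ.nodes k)) :
    ¬ ρ.colliderNodeAt (k + 1) := by
  rintro ⟨-, -, h3⟩
  simp only [Nat.add_sub_cancel] at h3
  obtain ⟨g1, g2, g3, g4, g5, g6⟩ := hG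
  have := @und_symm V G
  unfold colliderTriple at h3
  grind

lemma IsPureCollider.len_eq_of_backward (hG : G.IsSimple) {ρ : G.Route}
    (hρ : ρ.IsPureCollider) {k : ℕ} (hk : k + 1 ≤ ρ.len)
    (h : G.solid (ρ.nodes (k + 1)) (ρ.nodes k) ∨ G.dashed (ρ.nodes (k + 1)) (ρ.nodes k)) :
    ρ.len = k + 1 := by
  by_contra hne
  rcases hρ.2 (k + 1) (by omega) (by omega) with h' | h'
  · exact not_colliderNodeAt_of_backward hG h h'
  · exact not_inColliderSectionAt_of_backward hG h h'

end Route

/-- How an open walk arrived at its current node. The labels `und`, `solid` and `dashed` are for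
nodes outside `Z`; `solid` covers every node of an undirected section entered by a solid edge,
as long as the section avoids `Z`. -/
inductive Label
  /-- The walk starts here, or the last edge points backwards. -/
  | back
  /-- The last edge is undirected, in a section not entered by a solid edge. -/
  | und
  /-- In a section entered by a solid edge, with no node of `Z` so far. -/
  | solid
  /-- In a section that has met `Z` and has to become a collider section. -/
  | solidZ
  /-- The last edge is dashed and points forwards. -/
  | dashed
  /-- As `dashed`, at a node of `Z` that has to become a collider node. -/
  | dashedZ
  /-- At a node of `Z` not entered by a dashed edge that has to become a collider node. -/
  | await

/-- The labels with which an open walk may end. -/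
def Label.IsFinal (s : Label) : Prop := s = .back ∨ s = .und ∨ s = .solid ∨ s = .dashed

/-- One step of a walk that is open given `Z`. -/
inductive OpenStep (G : PreGraph V) (Z : Finset V) : V × Label → V × Label → Prop
  | und_und {a b s} : G.und a b → (s = .back ∨ s = .und ∨ s = .dashedZ) → b ∉ Z →
      OpenStep G Z (a, s) (b, .und)
  | und_await {a b s} : G.und a b → (s = .back ∨ s = .und ∨ s = .dashedZ ∨ s = .solid) →
      b ∈ Z → OpenStep G Z (a, s) (b, .await)
  | und_solid {a b} : G.und a b → b ∉ Z → OpenStep G Z (a, .solid) (b, .solid)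
  | und_solidZ {a b} : G.und a b → b ∈ Z → OpenStep G Z (a, .solid) (b, .solidZ)
  | und_solidZ_solidZ {a b} : G.und a b → OpenStep G Z (a, .solidZ) (b, .solidZ)
  | solid_solid {a b s} : G.solid a b → s.IsFinal → b ∉ Z → OpenStep G Z (a, s) (b, .solid)
  | solid_solidZ {a b s} : G.solid a b → s.IsFinal → b ∈ Z → OpenStep G Z (a, s) (b, .solidZ)
  | solid_await {a b s} : G.solid a b → s.IsFinal → b ∈ Z → OpenStep G Z (a, s) (b, .await)
  | dashed_dashed {a b s} : G.dashed a b → s.IsFinal → b ∉ Z →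
      OpenStep G Z (a, s) (b, .dashed)
  | dashed_dashedZ {a b s} : G.dashed a b → s.IsFinal → b ∈ Z →
      OpenStep G Z (a, s) (b, .dashedZ)
  | solid_back {a b s} : G.solid b a → (s = .back ∨ s = .und ∨ s = .dashedZ ∨ s = .solidZ) →
      b ∉ Z → OpenStep G Z (a, s) (b, .back)
  | dashed_back {a b s} : G.dashed b a → (s = .back ∨ s = .dashedZ ∨ s = .await) →
      b ∉ Z → OpenStep G Z (a, s) (b, .back)

/-- A walk from `X` that is open given `Z` can arrive at `c` with label `s`. -/
def OpenReach (G : PreGraph V) (X Z : Finset V) (c : V) (s : Label) : Prop :=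
  ∃ a ∈ X, a ∉ Z ∧ Relation.ReflTransGen (G.OpenStep Z) (a, .back) (c, s)

section Reach

variable {G : PreGraph V} {X Z : Finset V}

lemma OpenReach.refl {c : V} (hX : c ∈ X) (hZ : c ∉ Z) : G.OpenReach X Z c .back :=
  ⟨c, hX, hZ, .refl⟩

lemma OpenReach.step {c d : V} {s t : Label} (h : G.OpenReach X Z c s)
    (hs : G.OpenStep Z (c, s) (d, t)) : G.OpenReach X Z d t := by
  obtain ⟨a, ha, haZ, h⟩ := h
  exact ⟨a, ha, haZ, h.tail hs⟩

lemma OpenReach.notMem {c : V} {s : Label} (h : G.OpenReach X Z c s) (hs : s.IsFinal) :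
    c ∉ Z := by
  obtain ⟨a, ha, haZ, h⟩ := h
  unfold Label.IsFinal at hs
  cases h with
  | refl => exact haZ
  | tail _ h => cases h <;> first | assumption | simp at hs

lemma OpenReach.exists_dashed {c : V} (h : G.OpenReach X Z c .dashed) :
    ∃ a, G.dashed a c := by
  obtain ⟨a, ha, haZ, h⟩ := h
  cases h with
  | tail _ h => cases h; exact ⟨_, by assumption⟩

lemma OpenReach.mono {H : PreGraph V} (hu : ∀ a b, H.und a b → G.und a b)
    (hs : ∀ a b, H.solid a b → G.solid a b) (hd : ∀ a b, H.dashed a b → G.dashed a b)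
    {c : V} {s : Label} (h : H.OpenReach X Z c s) : G.OpenReach X Z c s := by
  obtain ⟨a, ha, haZ, h⟩ := h
  refine ⟨a, ha, haZ, Relation.ReflTransGen.mono (fun x y h => ?_) _ _ h⟩
  cases h with
  | und_und h h1 h2 => exact .und_und (hu _ _ h) h1 h2
  | und_await h h1 h2 => exact .und_await (hu _ _ h) h1 h2
  | und_solid h h1 => exact .und_solid (hu _ _ h) h1
  | und_solidZ h h1 => exact .und_solidZ (hu _ _ h) h1
  | und_solidZ_solidZ h => exact .und_solidZ_solidZ (hu _ _ h)
  | solid_solid h h1 h2 => exact .solid_solid (hs _ _ h) h1 h2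
  | solid_solidZ h h1 h2 => exact .solid_solidZ (hs _ _ h) h1 h2
  | solid_await h h1 h2 => exact .solid_await (hs _ _ h) h1 h2
  | dashed_dashed h h1 h2 => exact .dashed_dashed (hd _ _ h) h1 h2
  | dashed_dashedZ h h1 h2 => exact .dashed_dashedZ (hd _ _ h) h1 h2
  | solid_back h h1 h2 => exact .solid_back (hs _ _ h) h1 h2
  | dashed_back h h1 h2 => exact .dashed_back (hd _ _ h) h1 h2

lemma OpenReach.exists_run {c : V} {s : Label} (h : G.OpenReach X Z c s) :
    ∃ (n : ℕ) (f : ℕ → V) (l : ℕ → Label), f 0 ∈ X ∧ f 0 ∉ Z ∧ l 0 = .back ∧ f n = c ∧ l n = s ∧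
      ∀ i < n, G.OpenStep Z (f i, l i) (f (i + 1), l (i + 1)) := by
  obtain ⟨a, ha, haZ, h⟩ := h
  suffices ∀ x, Relation.ReflTransGen (G.OpenStep Z) x (c, s) →
      ∃ (n : ℕ) (f : ℕ → V × Label), f 0 = x ∧ f n = (c, s) ∧
        ∀ i < n, G.OpenStep Z (f i) (f (i + 1)) by
    obtain ⟨n, f, h0, hn, hf⟩ := this _ h
    exact ⟨n, fun i => (f i).1, fun i => (f i).2, by simpa [h0], by simpa [h0], by simp [h0],
      by simp [hn], by simp [hn], hf⟩
  intro x hx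
  induction hx using Relation.ReflTransGen.head_induction_on with
  | refl => exact ⟨0, fun _ => (c, s), rfl, rfl, by simp⟩
  | @head x y hxy _ ih =>
    obtain ⟨n, f, h0, hn, hf⟩ := ih
    refine ⟨n + 1, fun i => i.casesOn x f, rfl, hn, fun i hi => ?_⟩
    cases i with
    | zero => simpa [h0] using hxy
    | succ i => exact hf i (by omega)

lemma OpenStep.adj {a b : V} {s t : Label} (h : G.OpenStep Z (a, s) (b, t)) : G.adj a b := by
  unfold PreGraph.adj
  cases h <;> simp_all

lemma OpenStep.edge_cases {a b : V} {s t : Label} (h : G.OpenStep Z (a, s) (b, t)) :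
    (G.und a b ∧
      ((s = .back ∨ s = .und ∨ s = .dashedZ) ∧ (t = .und ∧ b ∉ Z ∨ t = .await ∧ b ∈ Z) ∨
        s = .solid ∧ (t = .solid ∧ b ∉ Z ∨ t = .solidZ ∧ b ∈ Z ∨ t = .await ∧ b ∈ Z) ∨
        s = .solidZ ∧ t = .solidZ)) ∨
    (G.solid a b ∧ s.IsFinal ∧
      (t = .solid ∧ b ∉ Z ∨ t = .solidZ ∧ b ∈ Z ∨ t = .await ∧ b ∈ Z)) ∨
    (G.dashed a b ∧ s.IsFinal ∧ (t = .dashed ∧ b ∉ Z ∨ t = .dashedZ ∧ b ∈ Z)) ∨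
    (G.solid b a ∧ (s = .back ∨ s = .und ∨ s = .dashedZ ∨ s = .solidZ) ∧
      t = .back ∧ b ∉ Z) ∨
    (G.dashed b a ∧ (s = .back ∨ s = .dashedZ ∨ s = .await) ∧ t = .back ∧ b ∉ Z) := by
  cases h <;> grind

end Reach

namespace Route

variable {G : PreGraph V} {Z : Finset V}

/-- `l` labels the nodes of `ρ` as an open walk. -/
def IsRun (ρ : G.Route) (Z : Finset V) (l : ℕ → Label) : Prop :=
  ∀ i < ρ.len, G.OpenStep Z (ρ.nodes i, l i) (ρ.nodes (i + 1), l (i + 1))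

lemma IsRun.exists_section_start {ρ : G.Route} {l : ℕ → Label} (hl : ρ.IsRun Z l)
    (h0 : l 0 = .back) {k : ℕ} (hk : k ≤ ρ.len) (h : l k = .solid ∨ l k = .solidZ) :
    ∃ p, 1 ≤ p ∧ p ≤ k ∧ G.solid (ρ.nodes (p - 1)) (ρ.nodes p) ∧
      ∀ m, p ≤ m → m < k → G.und (ρ.nodes m) (ρ.nodes (m + 1)) := by
  induction k with
  | zero => simp [h0] at h
  | succ k ih =>
    have hc := (hl k hk).edge_cases
    by_cases hs : G.solid (ρ.nodes k) (ρ.nodes (k + 1))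
    · exact ⟨k + 1, by omega, le_rfl, hs, by omega⟩
    · obtain ⟨p, hp, hpk, hps, hu⟩ := ih (by omega) (by grind)
      refine ⟨p, hp, by omega, hps, fun m hm hmk => ?_⟩
      rcases (Nat.lt_succ_iff.1 hmk).eq_or_lt with rfl | hmk
      · grind
      · exact hu m hm hmk

lemma IsRun.exists_section_end {ρ : G.Route} {l : ℕ → Label} (hl : ρ.IsRun Z l)
    (hfin : (l ρ.len).IsFinal) {k : ℕ} (hk : k ≤ ρ.len) (h : l k = .solidZ) :
    ∃ q, k ≤ q ∧ q + 1 ≤ ρ.len ∧ G.solid (ρ.nodes (q + 1)) (ρ.nodes q) ∧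
      ∀ m, k ≤ m → m < q → G.und (ρ.nodes m) (ρ.nodes (m + 1)) := by
  induction hk using Nat.decreasingInduction with
  | self => simp [h, Label.IsFinal] at hfin
  | of_succ k hk ih =>
    have hc := (hl k hk).edge_cases
    by_cases hs : G.solid (ρ.nodes (k + 1)) (ρ.nodes k)
    · exact ⟨k, le_rfl, hk, hs, by omega⟩
    · have hnf : ¬ (l k).IsFinal := by simp [h, Label.IsFinal]
      obtain ⟨q, hkq, hq, hqs, hu⟩ := ih (by grind)
      refine ⟨q, by omega, hq, hqs, fun m hm hmq => ?_⟩
      rcases hm.eq_or_lt with rfl | hm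
      · grind
      · exact hu m hm hmq

/-- A labelled walk is open. -/
lemma IsRun.isZOpen (hG : G.IsSimple) {ρ : G.Route} {l : ℕ → Label} (hl : ρ.IsRun Z l)
    (h0 : l 0 = .back) (h0Z : ρ.nodes 0 ∉ Z) (hfin : (l ρ.len).IsFinal) : ρ.IsZOpen Z := by
  obtain ⟨g1, g2, g3, g4, g5, g6⟩ := id hG
  have gs := @und_symm V G
  refine ⟨?_, ?_, ?_⟩
  · rintro k ⟨hk, hk', ht⟩
    obtain ⟨k, rfl⟩ := Nat.exists_eq_add_of_le' hk
    have hc := (hl k (by omega)).edge_cases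
    have hc' := (hl (k + 1) hk').edge_cases
    simp only [Nat.add_sub_cancel] at ht
    unfold colliderTriple Label.IsFinal at *
    grind
  · rintro p q ⟨hp, hpq, hq, hu, hs, hs'⟩
    have key : ∀ m, p ≤ m → m ≤ q → l m = .solid ∨ l m = .await ∨
        l m = .solidZ ∧ ∃ j, p ≤ j ∧ j ≤ q ∧ ρ.nodes j ∈ Z := by
      intro m hm
      induction m, hm using Nat.le_induction with
      | base =>
        intro _
        obtain ⟨p, rfl⟩ := Nat.exists_eq_add_of_le' hp
        have hc := (hl p (by omega)).edge_cases
        simp only [Nat.add_sub_cancel] at hs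
        grind
      | succ m hm ih =>
        intro hmq
        have hc := (hl m (by omega)).edge_cases
        have := hu m hm (by omega)
        grind
    have hc := (hl q (by omega)).edge_cases
    have := key q hpq le_rfl
    unfold Label.IsFinal at *
    grind
  · intro k hk hc hs hZ
    rcases Nat.eq_zero_or_pos k with rfl | hk0
    · exact h0Z hZ
    obtain ⟨k, rfl⟩ := Nat.exists_eq_add_of_le' hk0
    have hc1 := (hl k hk).edge_cases
    have hlk : l (k + 1) = .solidZ ∨ l (k + 1) = .dashedZ ∨ l (k + 1) = .await := by grind
    have hne : k + 1 ≠ ρ.len := by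
      rintro he
      rw [← he] at hfin
      unfold Label.IsFinal at hfin
      grind
    by_cases hz : l (k + 1) = .solidZ
    · obtain ⟨p, hp, hpk, hps, hpu⟩ := hl.exists_section_start h0 hk (Or.inr hz)
      obtain ⟨q, hkq, hq, hqs, hqu⟩ := hl.exists_section_end hfin hk hz
      refine hs ⟨p, q, ⟨hp, by omega, hq, fun m hm hmq => ?_, hps, hqs⟩, hpk, hkq⟩
      rcases lt_or_ge m (k + 1) with h | h
      · exact hpu m hm h
      · exact hqu m h hmq
    · have hc2 := (hl (k + 1) (by omega)).edge_cases
      refine hc ⟨by omega, by omega, ?_⟩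
      simp only [Nat.add_sub_cancel]
      unfold colliderTriple Label.IsFinal at *
      grind

/-- What the label `s` of the node at position `k` of an open route asserts about the route. -/
def LabelSpec (ρ : G.Route) (Z : Finset V) (k : ℕ) : Label → Prop
  | .back => ¬ ρ.inColliderSectionAt k
  | .und => ¬ ρ.inColliderSectionAt k ∧ ρ.nodes k ∉ Z ∧ 1 ≤ k ∧
      G.und (ρ.nodes (k - 1)) (ρ.nodes k)
  | .solid => ∃ p, 1 ≤ p ∧ p ≤ k ∧ G.solid (ρ.nodes (p - 1)) (ρ.nodes p) ∧
      (∀ m, p ≤ m → m < k → G.und (ρ.nodes m) (ρ.nodes (m + 1))) ∧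
      ∀ m, p ≤ m → m ≤ k → ρ.nodes m ∉ Z
  | .solidZ => ρ.inColliderSectionAt k
  | .dashed => 1 ≤ k ∧ G.dashed (ρ.nodes (k - 1)) (ρ.nodes k) ∧ ρ.nodes k ∉ Z
  | .dashedZ => 1 ≤ k ∧ G.dashed (ρ.nodes (k - 1)) (ρ.nodes k) ∧ ρ.nodes k ∈ Z
  | .await => ¬ ρ.inColliderSectionAt k ∧ ρ.nodes k ∈ Z ∧ 1 ≤ k ∧
      (G.solid (ρ.nodes (k - 1)) (ρ.nodes k) ∨ G.und (ρ.nodes (k - 1)) (ρ.nodes k))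

lemma inColliderSectionAt.und_or_solid {ρ : G.Route} {k : ℕ}
    (h : ρ.inColliderSectionAt k) :
    G.und (ρ.nodes k) (ρ.nodes (k + 1)) ∧ ρ.inColliderSectionAt (k + 1) ∨
      G.solid (ρ.nodes (k + 1)) (ρ.nodes k) := by
  obtain ⟨p, q, h, hp, hq⟩ := h
  rcases hq.eq_or_lt with rfl | hq
  · exact Or.inr h.2.2.2.2.2
  · exact Or.inl ⟨h.2.2.2.1 k hp hq, p, q, h, by omega, hq⟩

lemma IsZOpen.exists_openStep (hG : G.IsSimple) {ρ : G.Route} (hρ : ρ.IsZOpen Z) {k : ℕ}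
    (hk : k < ρ.len) {s : Label} (hs : ρ.LabelSpec Z k s) :
    ∃ t, ρ.LabelSpec Z (k + 1) t ∧
      G.OpenStep Z (ρ.nodes k, s) (ρ.nodes (k + 1), t) := by
  obtain ⟨g1, g2, g3, g4, g5, g6⟩ := id hG
  have gs := @und_symm V G
  have hnode := fun h1 h3 => hρ.1 k ⟨h1, hk, h3⟩
  have hnode' := fun h1 h3 => hρ.2.2 k hk.le h1 h3
  have hsec : ρ.inColliderSectionAt k → _ := fun h => h.und_or_solid
  have hzz : ρ.nodes k ∈ Z → ¬ ρ.inColliderSectionAt k → 1 ≤ k ∧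
      G.colliderTriple (ρ.nodes (k - 1)) (ρ.nodes k) (ρ.nodes (k + 1)) := by
    intro h h'
    by_contra hc
    exact hnode' (fun hc' => hc ⟨hc'.1, hc'.2.2⟩) h' h
  have hdash : 1 ≤ k → G.dashed (ρ.nodes (k - 1)) (ρ.nodes k) → ¬ ρ.inColliderSectionAt k := by
    intro h h'
    obtain ⟨k, rfl⟩ := Nat.exists_eq_add_of_le' h
    exact not_inColliderSectionAt_of_dashed hG h'
  have hfinal : s ≠ .solidZ → s ≠ .dashedZ → s ≠ .await → s.IsFinal := by
    cases s <;> simp [Label.IsFinal]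
  have hsin : s = .solid → 1 ≤ k ∧ ρ.nodes k ∉ Z ∧
      (G.solid (ρ.nodes (k - 1)) (ρ.nodes k) ∨ G.und (ρ.nodes (k - 1)) (ρ.nodes k)) := by
    rintro rfl
    obtain ⟨p, hp, hpk, hps, hu, hZ⟩ := hs
    refine ⟨by omega, hZ k hpk le_rfl, ?_⟩
    rcases hpk.eq_or_lt with rfl | h
    · exact Or.inl hps
    · have := hu (k - 1) (by omega) (by omega)
      rw [Nat.sub_add_cancel (by omega)] at this
      exact Or.inr this
  have hback : ¬ ρ.inColliderSectionAt (k + 1) → (G.solid (ρ.nodes (k + 1)) (ρ.nodes k) ∨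
      G.dashed (ρ.nodes (k + 1)) (ρ.nodes k)) → ρ.nodes (k + 1) ∉ Z :=
    fun h h' => hρ.2.2 (k + 1) hk (not_colliderNodeAt_of_backward hG h') h
  rcases ρ.adj_step k hk with hu | hsol | hsol | hdas | hdas
  · have hsec' : ρ.inColliderSectionAt (k + 1) → ρ.inColliderSectionAt k := fun h => h.of_und hG hu
    by_cases hZ : ρ.nodes (k + 1) ∈ Z
    · cases s with
      | back => exact ⟨.await, by grind [LabelSpec], .und_await hu (by simp) hZ⟩
      | und => exact ⟨.await, by grind [LabelSpec], .und_await hu (by simp) hZ⟩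
      | dashedZ => exact ⟨.await, by grind [LabelSpec], .und_await hu (by simp) hZ⟩
      | solid =>
        by_cases hin : ρ.inColliderSectionAt (k + 1)
        · exact ⟨.solidZ, hin, .und_solidZ hu hZ⟩
        · exact ⟨.await, by grind [LabelSpec], .und_await hu (by simp) hZ⟩
      | solidZ => exact ⟨.solidZ, by grind [LabelSpec], .und_solidZ_solidZ hu⟩
      | dashed => grind [LabelSpec, colliderTriple]
      | await => grind [LabelSpec, colliderTriple]
    · cases s with
      | back => exact ⟨.und, by grind [LabelSpec], .und_und hu (by simp) hZ⟩
      | und => exact ⟨.und, by grind [LabelSpec], .und_und hu (by simp) hZ⟩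
      | dashedZ => exact ⟨.und, by grind [LabelSpec], .und_und hu (by simp) hZ⟩
      | solid =>
        refine ⟨.solid, ?_, .und_solid hu hZ⟩
        obtain ⟨p, hp, hpk, hps, hpu, hpZ⟩ := hs
        refine ⟨p, hp, by omega, hps, fun m hm hmk => ?_, fun m hm hmk => ?_⟩
        · rcases (Nat.lt_succ_iff.1 hmk).eq_or_lt with rfl | hmk
          · exact hu
          · exact hpu m hm hmk
        · rcases hmk.eq_or_lt with rfl | hmk
          · exact hZ
          · exact hpZ m hm (by omega)
      | solidZ => exact ⟨.solidZ, by grind [LabelSpec], .und_solidZ_solidZ hu⟩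
      | dashed => grind [LabelSpec, colliderTriple]
      | await => grind [LabelSpec, colliderTriple]
  · have hf : s.IsFinal := by
      apply hfinal <;> rintro rfl <;> grind [LabelSpec, colliderTriple]
    by_cases hZ : ρ.nodes (k + 1) ∈ Z
    · by_cases hin : ρ.inColliderSectionAt (k + 1)
      · exact ⟨.solidZ, hin, .solid_solidZ hsol hf hZ⟩
      · exact ⟨.await, by grind [LabelSpec], .solid_await hsol hf hZ⟩
    · refine ⟨.solid, ⟨k + 1, by omega, le_rfl, hsol, by omega, fun m hm hm' => ?_⟩,
        .solid_solid hsol hf hZ⟩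
      rwa [le_antisymm hm' hm]
  · have hin := not_inColliderSectionAt_of_backward hG (Or.inl hsol)
    refine ⟨.back, hin, .solid_back hsol ?_ (hback hin (Or.inl hsol))⟩
    cases s with
    | solid =>
      obtain ⟨p, hp, hpk, hps, hpu, hpZ⟩ := hs
      obtain ⟨m, hm, hmk, hmZ⟩ := hρ.2.1 p k ⟨hp, hpk, hk, hpu, hps, hsol⟩
      exact absurd hmZ (hpZ m hm hmk)
    | dashed => grind [LabelSpec, colliderTriple]
    | await => grind [LabelSpec, colliderTriple]
    | _ => simp
  · have hf : s.IsFinal := by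
      apply hfinal <;> rintro rfl <;> grind [LabelSpec, colliderTriple]
    by_cases hZ : ρ.nodes (k + 1) ∈ Z
    · exact ⟨.dashedZ, ⟨by omega, hdas, hZ⟩, .dashed_dashedZ hdas hf hZ⟩
    · exact ⟨.dashed, ⟨by omega, hdas, hZ⟩, .dashed_dashed hdas hf hZ⟩
  · have hin := not_inColliderSectionAt_of_backward hG (Or.inr hdas)
    refine ⟨.back, hin, .dashed_back hdas ?_ (hback hin (Or.inr hdas))⟩
    cases s with
    | und => grind [LabelSpec, colliderTriple]
    | solid => grind [LabelSpec, colliderTriple]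
    | solidZ => grind [LabelSpec, colliderTriple]
    | dashed => grind [LabelSpec, colliderTriple]
    | _ => simp

lemma IsZOpen.end_notMem {ρ : G.Route} (hρ : ρ.IsZOpen Z) : ρ.nodes ρ.len ∉ Z :=
  hρ.2.2 ρ.len le_rfl (fun h => absurd h.2.1 (lt_irrefl _))
    (fun ⟨_, _, h, _, hq⟩ => absurd h.2.2.1 (by omega))

lemma IsZOpen.start_notMem {ρ : G.Route} (hρ : ρ.IsZOpen Z) : ρ.nodes 0 ∉ Z :=
  hρ.2.2 0 (Nat.zero_le _) (fun h => absurd h.1 (by omega))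
    (fun ⟨_, _, h, hp, _⟩ => absurd h.1 (by omega))

lemma IsZOpen.openReach (hG : G.IsSimple) {ρ : G.Route} (hρ : ρ.IsZOpen Z) {X : Finset V}
    (hX : ρ.nodes 0 ∈ X) : ∃ s, s.IsFinal ∧ G.OpenReach X Z (ρ.nodes ρ.len) s := by
  have key : ∀ k ≤ ρ.len, ∃ s, ρ.LabelSpec Z k s ∧ G.OpenReach X Z (ρ.nodes k) s := by
    intro k
    induction k with
    | zero =>
      refine fun _ => ⟨.back, ?_, .refl hX hρ.start_notMem⟩
      rintro ⟨p, q, h, hp, -⟩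
      exact absurd h.1 (by omega)
    | succ k ih =>
      intro hk
      obtain ⟨s, hs, hr⟩ := ih (by omega)
      obtain ⟨t, ht, hst⟩ := hρ.exists_openStep hG hk hs
      exact ⟨t, ht, hr.step hst⟩
  obtain ⟨s, hs, hr⟩ := key ρ.len le_rfl
  refine ⟨s, ?_, hr⟩
  have hZ := hρ.end_notMem
  cases s with
  | solidZ =>
    obtain ⟨p, q, h, -, hq⟩ := hs
    exact absurd h.2.2.1 (by omega)
  | dashedZ => exact absurd hs.2.2 hZ
  | await => exact absurd hs.2.1 hZ
  | _ => simp [Label.IsFinal]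

end Route

/-- There is a route from `c` to a node of `U` whose edges are undirected or point forwards,
without a subroute `R ⇢ S − T`, and not starting with an undirected edge unless `b` is true. -/
inductive DescendsTo (G : PreGraph V) (U : Finset V) : Bool → V → Prop
  | mem {b c} : c ∈ U → DescendsTo G U b c
  | und {c d} : G.und c d → DescendsTo G U true d → DescendsTo G U true c
  | solid {b c d} : G.solid c d → DescendsTo G U true d → DescendsTo G U b c
  | dashed {b c d} : G.dashed c d → DescendsTo G U false d → DescendsTo G U b c

section Separated

variable {G : PreGraph V} {X Y Z : Finset V}

/-- From a node outside `Z`, an open walk can descend to `Z` and come back, or else the node is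
reached from `X` by ascending. -/
lemma DescendsTo.openReach [DecidableEq V]
    (hY : ∀ c ∈ Y, ∀ s : Label, s.IsFinal → ¬ G.OpenReach X Z c s) {b : Bool} {c : V}
    (h : G.DescendsTo (X ∪ Y ∪ Z) b c) (hc : c ∉ Z) {s : Label} (hs : s.IsFinal)
    (hb : b = true → s = .solid) (hr : G.OpenReach X Z c s) :
    G.OpenReach X Z c .back ∨
      b = true ∧ (G.OpenReach X Z c .und ∨ G.OpenReach X Z c .solidZ) := by
  have hfs : Label.IsFinal .solid := by simp [Label.IsFinal]
  have hfd : Label.IsFinal .dashed := by simp [Label.IsFinal]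
  induction h generalizing s with
  | @mem b c hU =>
    simp only [Finset.mem_union] at hU
    rcases hU with (hU | hU) | hU
    · exact Or.inl (.refl hU hc)
    · exact absurd hr (hY c hU s hs)
    · exact absurd hU hc
  | @und c d hcd _ ih =>
    obtain rfl := hb rfl
    by_cases hd : d ∈ Z
    · exact Or.inr ⟨rfl, Or.inr ((hr.step (.und_solidZ hcd hd)).step
        (.und_solidZ_solidZ (und_symm hcd)))⟩
    · rcases ih hd hfs (fun _ => rfl) (hr.step (.und_solid hcd hd)) with h | ⟨-, h | h⟩
      · exact Or.inr ⟨rfl, Or.inl (h.step (.und_und (und_symm hcd) (by simp) hc))⟩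
      · exact Or.inr ⟨rfl, Or.inl (h.step (.und_und (und_symm hcd) (by simp) hc))⟩
      · exact Or.inr ⟨rfl, Or.inr (h.step (.und_solidZ_solidZ (und_symm hcd)))⟩
  | @solid b c d hcd _ ih =>
    left
    by_cases hd : d ∈ Z
    · exact (hr.step (.solid_solidZ hcd hs hd)).step (.solid_back hcd (by simp) hc)
    · rcases ih hd hfs (fun _ => rfl) (hr.step (.solid_solid hcd hs hd)) with h | ⟨-, h | h⟩ <;>
        exact h.step (.solid_back hcd (by simp) hc)
  | @dashed b c d hcd _ ih =>
    left
    by_cases hd : d ∈ Z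
    · exact (hr.step (.dashed_dashedZ hcd hs hd)).step (.dashed_back hcd (by simp) hc)
    · rcases ih hd hfd (by simp) (hr.step (.dashed_dashed hcd hs hd)) with h | ⟨h, -⟩
      · exact h.step (.dashed_back hcd (by simp) hc)
      · simp at h

/-- If no open walk leads from `X` to `Y`, and every directed edge starts a descending route to
`X ∪ Y ∪ Z`, then the set of end nodes of open walks from `X` is closed under pure collider
routes ending outside `Z`. -/
lemma Route.IsPureCollider.openReach [DecidableEq V] (hG : G.IsSimple)
    (hY : ∀ c ∈ Y, ∀ s : Label, s.IsFinal → ¬ G.OpenReach X Z c s)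
    (hsol : ∀ a b, G.solid a b → G.DescendsTo (X ∪ Y ∪ Z) true b)
    (hdas : ∀ a b, G.dashed a b → G.DescendsTo (X ∪ Y ∪ Z) false b)
    {ρ : G.Route} (hρ : ρ.IsPureCollider) (hZ : ρ.nodes ρ.len ∉ Z) {s : Label}
    (hs : s.IsFinal) (hr : G.OpenReach X Z (ρ.nodes 0) s) :
    ∃ t, t.IsFinal ∧ G.OpenReach X Z (ρ.nodes ρ.len) t := by
  have hfb : Label.IsFinal .back := by simp [Label.IsFinal]
  have hfu : Label.IsFinal .und := by simp [Label.IsFinal]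
  have hfs : Label.IsFinal .solid := by simp [Label.IsFinal]
  have hfd : Label.IsFinal .dashed := by simp [Label.IsFinal]
  have back_of_dashed : ∀ {a c s}, G.dashed a c → s.IsFinal → G.OpenReach X Z c s →
      G.OpenReach X Z c .back := by
    intro a c s h hs hr
    simpa using (hdas a c h).openReach hY (hr.notMem hs) hs (by simp) hr
  have solid_back : ∀ {b c s}, G.solid b c → b ∉ Z → s.IsFinal → G.OpenReach X Z c s →
      G.OpenReach X Z b .back := by
    intro b c s h hb hs hr
    rcases id hs with rfl | rfl | rfl | rfl
    · exact hr.step (.solid_back h (by simp) hb)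
    · exact hr.step (.solid_back h (by simp) hb)
    · rcases (hsol b c h).openReach hY (hr.notMem hs) hs (fun _ => rfl) hr with h' | ⟨-, h' | h'⟩
        <;> exact h'.step (.solid_back h (by simp) hb)
    · obtain ⟨a, ha⟩ := hr.exists_dashed
      exact (back_of_dashed ha hs hr).step (.solid_back h (by simp) hb)
  have dashed_back : ∀ {b c s}, G.dashed b c → b ∉ Z → s.IsFinal ∨ s = .await ∨ s = .dashedZ →
      G.OpenReach X Z c s → G.OpenReach X Z b .back := by
    intro b c s h hb hs hr
    rcases hs with hs | rfl | rfl
    · exact (back_of_dashed h hs hr).step (.dashed_back h (by simp) hb)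
    · exact hr.step (.dashed_back h (by simp) hb)
    · exact hr.step (.dashed_back h (by simp) hb)
  have dashed_fwd : ∀ {a c s}, G.dashed a c → s.IsFinal → G.OpenReach X Z a s →
      G.OpenReach X Z c .back ∨ G.OpenReach X Z c .dashedZ := by
    intro a c s h hs hr
    by_cases hc : c ∈ Z
    · exact Or.inr (hr.step (.dashed_dashedZ h hs hc))
    · exact Or.inl (back_of_dashed h hfd (hr.step (.dashed_dashed h hs hc)))
  have solid_fwd : ∀ {a c s}, G.solid a c → s.IsFinal → G.OpenReach X Z a s →
      ∃ t, (t.IsFinal ∨ t = .await ∨ t = .dashedZ) ∧ G.OpenReach X Z c t := by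
    intro a c s h hs hr
    by_cases hc : c ∈ Z
    · exact ⟨_, by simp, hr.step (.solid_await h hs hc)⟩
    · exact ⟨_, Or.inl hfs, hr.step (.solid_solid h hs hc)⟩
  have und_fwd : ∀ {a c s}, G.und a c → s.IsFinal ∨ s = .dashedZ → G.OpenReach X Z a s →
      ∃ t, (t.IsFinal ∨ t = .await ∧ c ∈ Z) ∧ G.OpenReach X Z c t := by
    intro a c s h hs hr
    obtain ⟨s, hs, hr⟩ : ∃ s, (s = .back ∨ s = .und ∨ s = .dashedZ ∨ s = .solid) ∧
        G.OpenReach X Z a s := by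
      rcases hs with hs | rfl
      · rcases id hs with rfl | rfl | rfl | rfl
        · exact ⟨_, by simp, hr⟩
        · exact ⟨_, by simp, hr⟩
        · exact ⟨_, by simp, hr⟩
        · obtain ⟨a', ha⟩ := hr.exists_dashed
          exact ⟨_, by simp, back_of_dashed ha hs hr⟩
      · exact ⟨_, by simp, hr⟩
    by_cases hc : c ∈ Z
    · exact ⟨.await, by simp [hc], hr.step (.und_await h hs hc)⟩
    · rcases hs with rfl | rfl | rfl | rfl
      · exact ⟨_, Or.inl hfu, hr.step (.und_und h (by simp) hc)⟩
      · exact ⟨_, Or.inl hfu, hr.step (.und_und h (by simp) hc)⟩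
      · exact ⟨_, Or.inl hfu, hr.step (.und_und h (by simp) hc)⟩
      · exact ⟨_, Or.inl hfs, hr.step (.und_solid h hc)⟩
  have hlen := hρ.1
  by_cases h1 : ρ.len = 1
  · rw [h1] at hZ ⊢
    rcases ρ.adj_step 0 hlen with h | h | h | h | h
    · obtain ⟨t, ht | ⟨-, ht⟩, hr'⟩ := und_fwd h (Or.inl hs) hr
      · exact ⟨t, ht, hr'⟩
      · exact absurd ht hZ
    · exact ⟨_, hfs, hr.step (.solid_solid h hs hZ)⟩
    · exact ⟨_, hfb, solid_back h hZ hs hr⟩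
    · exact ⟨_, hfd, hr.step (.dashed_dashed h hs hZ)⟩
    · exact ⟨_, hfb, dashed_back h hZ (Or.inl hs) hr⟩
  have h2 : 2 ≤ ρ.len := by omega
  rcases hρ.2 1 one_pos h2 with ⟨-, -, hc⟩ | ⟨p, q, ⟨hp, hpq, hq, hu, hps, hqs⟩, hp1, hq1⟩
  · simp only [Nat.sub_self, Nat.reduceAdd] at hc
    rcases hc with ⟨ha, hb⟩ | ⟨ha, hb⟩ | ⟨ha, hb⟩ | ⟨ha, hb⟩ | ⟨ha, hb⟩
    · rw [hρ.len_eq_of_backward hG (k := 1) h2 (Or.inr hb)] at hZ ⊢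
      rcases dashed_fwd ha hs hr with h | h
      · exact ⟨_, hfb, dashed_back hb hZ (Or.inl hfb) h⟩
      · exact ⟨_, hfb, dashed_back hb hZ (by simp) h⟩
    · have h' : ∃ t, (t.IsFinal ∨ t = .await ∧ ρ.nodes 2 ∈ Z) ∧
          G.OpenReach X Z (ρ.nodes 2) t := by
        rcases dashed_fwd ha hs hr with h | h
        · exact und_fwd hb (Or.inl hfb) h
        · exact und_fwd hb (Or.inr rfl) h
      obtain ⟨t, ht, hr'⟩ := h'
      by_cases h3 : ρ.len = 2
      · rw [h3] at hZ ⊢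
        exact ⟨t, ht.resolve_right fun h => hZ h.2, hr'⟩
      · rcases hρ.2 2 two_pos (by omega) with ⟨-, -, hc⟩ | hin
        · simp only [Nat.reduceSub, Nat.reduceAdd] at hc
          have hd : G.dashed (ρ.nodes 3) (ρ.nodes 2) := by
            rcases hc with ⟨h, -⟩ | ⟨h, -⟩ | ⟨-, h⟩ | ⟨h, -⟩ | ⟨h, -⟩
            · exact absurd h (hG.und_not_dashed _ _ hb)
            · exact absurd h (hG.und_not_dashed _ _ hb)
            · exact h
            · exact absurd h (hG.und_not_dashed _ _ hb)
            · exact absurd h (hG.und_not_solid _ _ hb)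
          rw [hρ.len_eq_of_backward hG (k := 2) (by omega) (Or.inr hd)] at hZ ⊢
          exact ⟨_, hfb, dashed_back hd hZ (by tauto) hr'⟩
        · exact absurd (hin.of_und hG hb) (not_inColliderSectionAt_of_dashed hG ha)
    · rw [hρ.len_eq_of_backward hG (k := 1) h2 (Or.inr hb)] at hZ ⊢
      obtain ⟨t, ht, hr'⟩ := und_fwd ha (Or.inl hs) hr
      exact ⟨_, hfb, dashed_back hb hZ (by tauto) hr'⟩
    · rw [hρ.len_eq_of_backward hG (k := 1) h2 (Or.inl hb)] at hZ ⊢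
      rcases dashed_fwd ha hs hr with h | h
      · exact ⟨_, hfb, solid_back hb hZ hfb h⟩
      · exact ⟨_, hfb, h.step (.solid_back hb (by simp) hZ)⟩
    · rw [hρ.len_eq_of_backward hG (k := 1) h2 (Or.inr hb)] at hZ ⊢
      obtain ⟨t, ht, hr'⟩ := solid_fwd ha hs hr
      exact ⟨_, hfb, dashed_back hb hZ ht hr'⟩
  · obtain rfl : p = 1 := le_antisymm hp1 hp
    have key : ∀ m, 1 ≤ m → m ≤ q → G.OpenReach X Z (ρ.nodes m) .solid ∨
        G.OpenReach X Z (ρ.nodes m) .solidZ := by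
      intro m hm
      induction m, hm using Nat.le_induction with
      | base =>
        intro _
        by_cases hc : ρ.nodes 1 ∈ Z
        · exact Or.inr (hr.step (.solid_solidZ hps hs hc))
        · exact Or.inl (hr.step (.solid_solid hps hs hc))
      | succ m hm ih =>
        intro hmq
        have hum := hu m hm (by omega)
        rcases ih (by omega) with h | h
        · by_cases hc : ρ.nodes (m + 1) ∈ Z
          · exact Or.inr (h.step (.und_solidZ hum hc))
          · exact Or.inl (h.step (.und_solid hum hc))
        · exact Or.inr (h.step (.und_solidZ_solidZ hum))
    rw [hρ.len_eq_of_backward hG hq (Or.inl hqs)] at hZ ⊢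
    rcases key q hpq le_rfl with h | h
    · exact ⟨_, hfb, solid_back hqs hZ hfs h⟩
    · exact ⟨_, hfb, h.step (.solid_back hqs (by simp) hZ)⟩

lemma Sep.not_openReach (hG : G.IsSimple) (h : G.Sep X Y Z) {c : V} (hc : c ∈ Y) {s : Label}
    (hs : s.IsFinal) : ¬ G.OpenReach X Z c s := by
  intro hr
  obtain ⟨n, f, l, h0, h0Z, hl0, hn, hln, hstep⟩ := hr.exists_run
  let ρ : G.Route := ⟨n, f, fun i hi => (hstep i hi).adj⟩
  have hrun : ρ.IsRun Z l := hstep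
  refine h ⟨ρ, Or.inl ⟨h0, ?_⟩, hrun.isZOpen hG hl0 h0Z ?_⟩
  · change f n ∈ Y
    rwa [hn]
  · change (l n).IsFinal
    rwa [hln]

lemma exists_openReach_of_not_sep (hG : G.IsSimple) {a : V} (h : ¬ G.Sep X {a} Z) :
    ∃ s, s.IsFinal ∧ G.OpenReach X Z a s := by
  obtain ⟨ρ, ⟨h0, hn⟩ | ⟨h0, hn⟩, hρ⟩ := not_not.1 h
  · rw [Finset.mem_singleton] at hn
    exact hn ▸ hρ.openReach hG h0
  · rw [Finset.mem_singleton] at h0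
    have := hρ.reverse.openReach hG (X := X) (by rwa [Route.reverse_nodes, Nat.sub_zero])
    rwa [Route.reverse_len, Route.reverse_nodes, Nat.sub_self, h0] at this

end Separated

section Derived

variable {G : PreGraph V}

lemma derived_und {U : Finset V} {a b : V} (h : (G.derived U).und a b) : G.und a b :=
  h.imp And.left And.left

lemma IsSimple.derived (hG : G.IsSimple) (U : Finset V) : (G.derived U).IsSimple where
  und_not_solid a b h h' := hG.und_not_solid a b (derived_und h) h'.1
  und_not_dashed a b h h' := hG.und_not_dashed a b (derived_und h) h'.1
  solid_not_solid a b h h' := hG.solid_not_solid a b h.1 h'.1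
  solid_not_dashed a b h h' := hG.solid_not_dashed a b h.1 h'.1
  solid_not_dashed_rev a b h h' := hG.solid_not_dashed_rev a b h.1 h'.1
  dashed_not_dashed a b h h' := hG.dashed_not_dashed a b h.1 h'.1

/-- The second node of a route witnessing `goodFrom` descends to `U` in the derived graph. -/
lemma descendsTo_of_route (hsymm : ∀ a b, G.undir a b → G.undir b a)
    {U : Finset V} (n : ℕ) :
    ∀ f : ℕ → V, f (n + 1) ∈ U → (∀ i < n + 1, G.fwd (f i) (f (i + 1))) →
      (∀ i, i + 2 ≤ n + 1 → ¬ (G.dashed (f i) (f (i + 1)) ∧ G.und (f (i + 1)) (f (i + 2)))) →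
      ∀ b : Bool, (G.dashed (f 0) (f 1) ∨ b = true) → (G.derived U).DescendsTo U b (f 1) := by
  induction n with
  | zero => exact fun f hU _ _ b _ => .mem hU
  | succ n ih =>
    intro f hU hf hd b hb
    have hgood : G.goodFrom U (f 1) (f 2) :=
      ⟨fun i => f (i + 1), n + 1, by omega, rfl, rfl, hU, fun i hi => hf (i + 1) (by omega),
        fun i hi => hd (i + 1) (by omega)⟩
    have ih' := ih (fun i => f (i + 1)) hU (fun i hi => hf (i + 1) (by omega))
      (fun i hi => hd (i + 1) (by omega))
    rcases hf 1 (by omega) with h | h | h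
    · have hbt : b = true := hb.resolve_left fun h' => hd 0 (by omega) ⟨h', h⟩
      subst hbt
      exact .und (Or.inl ⟨h.elim id (hsymm _ _), hgood⟩) (ih' true (Or.inr rfl))
    · exact .solid ⟨h, hgood⟩ (ih' true (Or.inr rfl))
    · exact .dashed ⟨h, hgood⟩ (ih' false (Or.inl h))

lemma goodFrom.descendsTo (hsymm : ∀ a b, G.undir a b → G.undir b a)
    {U : Finset V} {a c : V} (h : G.goodFrom U a c) {b : Bool}
    (hb : G.dashed a c ∨ b = true) : (G.derived U).DescendsTo U b c := by
  obtain ⟨f, n, hn, rfl, rfl, hU, hf, hd⟩ := h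
  obtain ⟨n, rfl⟩ := Nat.exists_eq_add_of_le' hn
  exact descendsTo_of_route hsymm n f hU hf hd b hb

end Derived

end PreGraph

lemma ChainGraph.isSimple (G : ChainGraph V) : G.toPreGraph.IsSimple where
  und_not_solid a b h := G.undir_not_solid a b (h.elim id (G.undir_symm _ _))
  und_not_dashed a b h := G.undir_not_dashed a b (h.elim id (G.undir_symm _ _))
  solid_not_solid := G.solid_not_solid
  solid_not_dashed := G.solid_not_dashed
  solid_not_dashed_rev := G.solid_not_dashed_rev
  dashed_not_dashed := G.dashed_not_dashed

/-- **Lemma 3.** If `X ⊥_G Y | Z` in a UCG `G`, then there is no pure collider route in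
`G^{X∪Y∪Z}` between some `A' ∈ X'` and `B' ∈ Y'`. -/
theorem no_pure_collider_route_between_Xp_and_Yp
    {V : Type*} [Fintype V] [DecidableEq V] (G : ChainGraph V) (hG : G.IsUCG)
    (X Y Z : Finset V) (hd : PDisj X Y Z) (hsep : G.toPreGraph.Sep X Y Z) :
    ¬ ∃ ρ : (G.toPreGraph.derived (X ∪ Y ∪ Z)).Route,
      ρ.IsPureCollider ∧
      ((ρ.nodes 0 ∈ G.toPreGraph.derivedXp X Y Z ∧
          ρ.nodes ρ.len ∈ G.toPreGraph.derivedYp X Y Z) ∨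
        (ρ.nodes 0 ∈ G.toPreGraph.derivedYp X Y Z ∧
          ρ.nodes ρ.len ∈ G.toPreGraph.derivedXp X Y Z)) := by
  have hs := G.isSimple
  have hH := hs.derived (X ∪ Y ∪ Z)
  set H := G.toPreGraph.derived (X ∪ Y ∪ Z)
  have hY : ∀ c ∈ Y, ∀ s : PreGraph.Label, s.IsFinal → ¬ H.OpenReach X Z c s :=
    fun c hc s hfin hr => hsep.not_openReach hs hc hfin
      (hr.mono (fun _ _ => PreGraph.derived_und) (fun _ _ => And.left) (fun _ _ => And.left))
  have key : ∀ ρ : H.Route, ρ.IsPureCollider → ρ.nodes 0 ∈ G.toPreGraph.derivedXp X Y Z →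
      ρ.nodes ρ.len ∉ G.toPreGraph.derivedYp X Y Z := by
    intro ρ hρ hA hB
    simp only [PreGraph.derivedXp, PreGraph.derivedYp, Finset.mem_sdiff, Finset.mem_union,
      Finset.mem_filter, not_or] at hA hB
    obtain ⟨⟨-, -, hBZ⟩, hBsep⟩ := hB
    obtain ⟨hAv, hA, hAZ⟩ := hA
    have hreach : ∃ s : PreGraph.Label, s.IsFinal ∧ H.OpenReach X Z (ρ.nodes 0) s := by
      by_cases hAX : ρ.nodes 0 ∈ X
      · exact ⟨_, Or.inl rfl, .refl hAX hAZ⟩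
      · exact PreGraph.exists_openReach_of_not_sep hH fun h => hA ⟨⟨hAv, hAX, hAZ⟩, h⟩
    obtain ⟨s, hfin, hr⟩ := hreach
    obtain ⟨t, ht, hr'⟩ := hρ.openReach hH hY
      (fun a b h => h.2.descendsTo G.undir_symm (Or.inr rfl))
      (fun a b h => h.2.descendsTo G.undir_symm (Or.inl h.1)) hBZ hfin hr
    exact hBsep.not_openReach hH (Finset.mem_singleton_self _) ht hr'
  rintro ⟨ρ, hρ, ⟨h0, hn⟩ | ⟨h0, hn⟩⟩
  · exact key ρ hρ h0 hn
  · refine key ρ.reverse hρ.reverse ?_ ?_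
    · rwa [PreGraph.Route.reverse_nodes, Nat.sub_zero]
    · rwa [PreGraph.Route.reverse_len, PreGraph.Route.reverse_nodes, Nat.sub_self]
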